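/- Fix an integer n ≥ 2 and let B(q) be the n×n matrix over ℚ(q) with B(q)_{ii} = [2]_q for 1 ≤ i ≤ n−1, B(q)_{nn} = [4]_q, B(q)_{i,i+1} = B(q)_{i+1,i} = −1 for 1 ≤ i ≤ n−2, B(q)_{n−1,n} = B(q)_{n,n−1} = −[2]_q, and all other entries 0 (the symmetrized q-Cartan matrix of type B_n in the paper's conventions). Then B(q) is invertible and every entry of the matrix [2(n+1)]_q · B(q)^{−1} lies in ℕ[q,q^{−1}]. -/

import Mathlib

/-!
Scaling the last row and the last column of `B` by `1/[2]` turns it into a tridiagonal matrix `T`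
with off-diagonal entries `-1` and diagonal `[2], …, [2], ⟨2⟩/[2]`. Both `i ↦ [i]` and
`i ↦ ⟨n+1-i⟩` (with `i` running from `1` to `n`) solve the recursion `[2] x_i = x_{i-1} + x_{i+1}`;
the first satisfies the left boundary condition of `T`, the second the right one, and their
Wronskian is `⟨n+1⟩`. Hence `T⁻¹` has entries `[min i j] ⟨n+1 - max i j⟩ / ⟨n+1⟩` (the usual Green
function). As `[2(n+1)] = [n+1] ⟨n+1⟩`, the entries of `[2(n+1)] B⁻¹` are
`[n+1] [min i j] ⟨n+1 - max i j⟩`, divided by `[2] = ⟨1⟩` for each of `i`, `j` equal to `n`.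
These are visibly in `ℕ[q,q⁻¹]` except for `i = j = n`, where the entry is `[n+1] [n] / [2]`;
there one of `n`, `n+1` is even, and `[2m]_q / [2]_q = [m]_{q²}`.
-/

/-- The variable `q`, as an element of the field `ℚ(q)` of rational functions. -/
noncomputable def qq : RatFunc ℚ := RatFunc.X

/-- The quantum number `[m]_q = (q^m − q^{−m})/(q − q^{−1}) = Σ_{i=0}^{m−1} q^{m−1−2i}`. -/
noncomputable def qNum (m : ℕ) : RatFunc ℚ :=
  ∑ i ∈ Finset.range m, qq ^ ((m : ℤ) - 1 - 2 * (i : ℤ))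

/-- An element of `ℚ(q)` lies in `ℕ[q,q^{−1}]` if it is a Laurent polynomial in `q`
with nonnegative integer coefficients. -/
def IsNatLaurent (f : RatFunc ℚ) : Prop :=
  ∃ c : ℤ →₀ ℕ, f = c.sum fun k n => (n : RatFunc ℚ) * qq ^ k

/-! ### Closure properties of `ℕ[q,q⁻¹]` -/

lemma isNatLaurent_monomial (n : ℕ) (k : ℤ) : IsNatLaurent ((n : RatFunc ℚ) * qq ^ k) :=
  ⟨Finsupp.single k n, by simp⟩

lemma isNatLaurent_zpow (k : ℤ) : IsNatLaurent (qq ^ k) := by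
  simpa using isNatLaurent_monomial 1 k

lemma IsNatLaurent.add {f g : RatFunc ℚ} (hf : IsNatLaurent f) (hg : IsNatLaurent g) :
    IsNatLaurent (f + g) := by
  obtain ⟨c, rfl⟩ := hf
  obtain ⟨d, rfl⟩ := hg
  refine ⟨c + d, ?_⟩
  rw [Finsupp.sum_add_index'] <;> intros <;> simp [add_mul]

lemma isNatLaurent_sum {ι : Type*} (s : Finset ι) (f : ι → RatFunc ℚ)
    (h : ∀ i ∈ s, IsNatLaurent (f i)) : IsNatLaurent (∑ i ∈ s, f i) :=
  Finset.sum_induction f IsNatLaurent (fun _ _ => IsNatLaurent.add) ⟨0, by simp⟩ h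

lemma qq_ne_zero : qq ≠ 0 := RatFunc.X_ne_zero

lemma IsNatLaurent.mul {f g : RatFunc ℚ} (hf : IsNatLaurent f) (hg : IsNatLaurent g) :
    IsNatLaurent (f * g) := by
  obtain ⟨c, rfl⟩ := hf
  obtain ⟨d, rfl⟩ := hg
  rw [Finsupp.sum, Finsupp.sum, Finset.sum_mul_sum]
  refine isNatLaurent_sum _ _ fun i _ => isNatLaurent_sum _ _ fun j _ => ?_
  have := isNatLaurent_monomial (c i * d j) (i + j)
  rw [zpow_add₀ qq_ne_zero] at this
  convert this using 1
  push_cast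
  ring

/-! ### Quantum numbers -/

/-- The quantum integer `[m]_q` for an arbitrary integer `m`, as a quotient. -/
noncomputable def qInt (m : ℤ) : RatFunc ℚ := (qq ^ m - qq ^ (-m)) / (qq - qq⁻¹)

/-- The element `⟨m⟩_q = q^m + q^{-m}`. -/
noncomputable def qBr (m : ℤ) : RatFunc ℚ := qq ^ m + qq ^ (-m)

lemma qq_pow_ne_one {m : ℕ} (hm : m ≠ 0) : qq ^ m ≠ 1 := by
  intro h
  have h1 : algebraMap (Polynomial ℚ) (RatFunc ℚ) (Polynomial.X ^ m) =
      algebraMap (Polynomial ℚ) (RatFunc ℚ) 1 := by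
    simpa [qq] using h
  have h2 := congrArg Polynomial.natDegree (RatFunc.algebraMap_injective ℚ h1)
  simp at h2
  exact hm h2

lemma qq_zpow_sub_ne_zero {m : ℕ} (hm : m ≠ 0) : qq ^ (m : ℤ) - qq ^ (-(m : ℤ)) ≠ 0 := by
  intro h
  apply qq_pow_ne_one (m := m + m) (by omega)
  have h0 : qq ^ m ≠ 0 := pow_ne_zero _ qq_ne_zero
  rw [zpow_neg, zpow_natCast, sub_eq_zero] at h
  rw [pow_add]
  nth_rewrite 2 [h]
  exact mul_inv_cancel₀ h0

lemma qq_sub_inv_ne_zero : qq - qq⁻¹ ≠ 0 := by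
  simpa using qq_zpow_sub_ne_zero one_ne_zero

lemma telescope (x : RatFunc ℚ) (hx : x ≠ 0) (m : ℕ) :
    (x - x⁻¹) * ∑ i ∈ Finset.range m, x ^ ((m : ℤ) - 1 - 2 * (i : ℤ)) =
      x ^ (m : ℤ) - x ^ (-(m : ℤ)) := by
  have h := Finset.sum_range_sub' (fun i : ℕ => x ^ ((m : ℤ) - 2 * (i : ℤ))) m
  rw [Finset.mul_sum]
  convert h using 1
  · refine Finset.sum_congr rfl fun i _ => ?_
    rw [sub_mul, ← zpow_one_add₀ hx, ← zpow_neg_one, ← zpow_add₀ hx]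
    congr 2 <;> push_cast <;> ring
  · congr 2
    ring

lemma qNum_eq (m : ℕ) : qNum m = qInt m := by
  rw [qInt, eq_div_iff qq_sub_inv_ne_zero, mul_comm]
  exact telescope qq qq_ne_zero m

lemma qInt_ne_zero {m : ℕ} (hm : m ≠ 0) : qInt m ≠ 0 :=
  div_ne_zero (qq_zpow_sub_ne_zero hm) qq_sub_inv_ne_zero

lemma isNatLaurent_qInt (m : ℕ) : IsNatLaurent (qInt m) := by
  rw [← qNum_eq]
  exact isNatLaurent_sum _ _ fun _ _ => isNatLaurent_zpow _

lemma isNatLaurent_qBr (m : ℤ) : IsNatLaurent (qBr m) :=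
  (isNatLaurent_zpow _).add (isNatLaurent_zpow _)

lemma qInt_zero : qInt 0 = 0 := by simp [qInt]

lemma qInt_mul_qBr (a b : ℤ) : qInt a * qBr b = qInt (a + b) + qInt (a - b) := by
  have h := qq_ne_zero
  rw [qInt, qInt, qInt, qBr, div_mul_eq_mul_div, ← add_div]
  congr 1
  simp only [sub_mul, mul_add, ← zpow_add₀ h]
  ring_nf

lemma qBr_mul_qBr (a b : ℤ) : qBr a * qBr b = qBr (a + b) + qBr (a - b) := by
  have h := qq_ne_zero
  simp only [qBr, add_mul, mul_add, ← zpow_add₀ h]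
  ring_nf

lemma qInt_two : qInt 2 = qBr 1 := by
  have h := qq_sub_inv_ne_zero
  rw [qInt, div_eq_iff h, qBr]
  have := qq_ne_zero
  simp only [zpow_neg, zpow_ofNat]
  field_simp
  ring

lemma qBr_one_ne_zero : qBr 1 ≠ 0 := by
  rw [← qInt_two]; exact_mod_cast qInt_ne_zero (m := 2) (by norm_num)

lemma qInt_four : qInt 4 = qBr 2 * qBr 1 := by
  rw [← qInt_two, mul_comm, qInt_mul_qBr]; norm_num [qInt_zero]

lemma qInt_two_mul (a : ℤ) : qInt (2 * a) = qInt a * qBr a := by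
  rw [qInt_mul_qBr, sub_self, qInt_zero, add_zero, two_mul]

lemma qInt_sub_qInt (a : ℤ) : qInt (a + 1) - qInt (a - 1) = qBr a := by
  have h := qq_sub_inv_ne_zero
  have h0 := qq_ne_zero
  rw [qInt, qInt, ← sub_div, div_eq_iff h, qBr]
  have e1 : qq - qq⁻¹ = qq ^ (1 : ℤ) - qq ^ (-1 : ℤ) := by simp
  rw [e1]
  simp only [add_mul, mul_sub, ← zpow_add₀ h0]
  ring_nf

/-- The Wronskian of the solutions `a ↦ [a]` and `a ↦ ⟨N-a⟩` of the recursion is `⟨N⟩`. -/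
lemma wronskian (a N : ℤ) :
    qInt (a + 1) * qBr (N - a) - qInt a * qBr (N - a - 1) = qBr N := by
  rw [qInt_mul_qBr, qInt_mul_qBr, ← qInt_sub_qInt]
  ring_nf

/-- `[2m]_q / [2]_q = [m]_{q²}` lies in `ℕ[q,q⁻¹]`. -/
lemma isNatLaurent_even_div (m : ℕ) : IsNatLaurent (qInt (2 * m) / qBr 1) := by
  have h0 : qq ^ 2 ≠ 0 := pow_ne_zero _ qq_ne_zero
  have h := telescope (qq ^ 2) h0 m
  have e : qInt (2 * m) / qBr 1 =
      ∑ i ∈ Finset.range m, (qq ^ 2) ^ ((m : ℤ) - 1 - 2 * (i : ℤ)) := by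
    rw [div_eq_iff qBr_one_ne_zero, qInt, div_eq_iff qq_sub_inv_ne_zero]
    have e2 : ∀ k : ℤ, (qq ^ 2) ^ k = qq ^ (2 * k) := fun k => by
      rw [zpow_mul]; norm_cast
    rw [e2 (m : ℤ), e2 (-(m : ℤ)), mul_neg] at h
    rw [← h, qBr, zpow_neg, zpow_one]
    ring
  rw [e]
  refine isNatLaurent_sum _ _ fun i _ => ?_
  have := isNatLaurent_zpow (2 * ((m : ℤ) - 1 - 2 * (i : ℤ)))
  rwa [zpow_mul, zpow_ofNat] at this

lemma isNatLaurent_consecutive_div (n : ℕ) :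
    IsNatLaurent (qInt ((n : ℤ) + 1) * qInt n / qBr 1) := by
  rcases Nat.even_or_odd' n with ⟨m, rfl | rfl⟩
  · have := (isNatLaurent_qInt (2 * m + 1)).mul (isNatLaurent_even_div m)
    rw [← mul_div_assoc] at this
    exact_mod_cast this
  · have := (isNatLaurent_qInt (2 * m + 1)).mul (isNatLaurent_even_div (m + 1))
    rw [← mul_div_assoc, mul_comm (qInt _)] at this
    convert this using 3 <;> push_cast <;> ring_nf

/-! ### The Green function -/

/-- The Green function `[min + 1] ⟨n - max⟩` of the rescaled matrix, for `0`-based indices. -/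
noncomputable def green (n a b : ℕ) : RatFunc ℚ :=
  qInt ((min a b : ℕ) + 1) * qBr ((n : ℤ) - (max a b : ℕ))

/-- The scaling factor, `1/[2]` at the last index and `1` elsewhere. -/
noncomputable def scal (n a : ℕ) : RatFunc ℚ := if a + 1 = n then (qBr 1)⁻¹ else 1

lemma green_of_le {n a b : ℕ} (h : a ≤ b) :
    green n a b = qInt ((a : ℤ) + 1) * qBr ((n : ℤ) - b) := by
  simp [green, h]

lemma green_of_ge {n a b : ℕ} (h : b ≤ a) :
    green n a b = qInt ((b : ℤ) + 1) * qBr ((n : ℤ) - a) := by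
  simp [green, h]

lemma qInt_rec (a : ℤ) : qBr 1 * qInt a = qInt (a + 1) + qInt (a - 1) := by
  rw [mul_comm, qInt_mul_qBr]

lemma qBr_rec (a : ℤ) : qBr 1 * qBr a = qBr (a + 1) + qBr (a - 1) := by
  rw [mul_comm, qBr_mul_qBr]

lemma green_first (n b : ℕ) :
    qBr 1 * green n 0 b - green n 1 b = if b = 0 then qBr ((n : ℤ) + 1) else 0 := by
  have h1 : qInt 1 = 1 := by simpa [qInt] using div_self qq_sub_inv_ne_zero
  rcases Nat.eq_zero_or_pos b with rfl | hb
  · rw [green_of_le le_rfl, green_of_ge (Nat.zero_le _), if_pos rfl]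
    have := qBr_rec n
    simp only [Nat.cast_zero, Nat.cast_one, zero_add, h1, sub_zero] at this ⊢
    linear_combination this
  · rw [green_of_le (Nat.zero_le _), green_of_le hb, if_neg (by omega)]
    norm_num [h1, qInt_two]

lemma green_middle (n a b : ℕ) :
    qBr 1 * green n (a + 1) b - green n a b - green n (a + 2) b =
      if b = a + 1 then qBr ((n : ℤ) + 1) else 0 := by
  rcases lt_trichotomy b (a + 1) with h | rfl | h
  · rw [green_of_ge (by omega), green_of_ge (by omega), green_of_ge (by omega), if_neg (by omega)]
    have := qBr_rec ((n : ℤ) - (a + 1))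
    rw [show (n : ℤ) - (a + 1) + 1 = n - a by ring,
      show (n : ℤ) - (a + 1) - 1 = n - (a + 2) by ring] at this
    push_cast
    linear_combination qInt ((b : ℤ) + 1) * this
  · rw [green_of_ge le_rfl, green_of_le (by omega), green_of_ge (by omega), if_pos rfl]
    have h1 := qInt_rec ((a : ℤ) + 2)
    have h2 := wronskian ((a : ℤ) + 2) (n + 1)
    ring_nf at h1 h2 ⊢
    push_cast
    ring_nf
    linear_combination qBr (-1 - (a : ℤ) + n) * h1 + h2
  · rw [green_of_le (by omega), green_of_le (by omega), green_of_le (by omega), if_neg (by omega)]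
    have := qInt_rec ((a : ℤ) + 2)
    ring_nf at this ⊢
    push_cast
    ring_nf
    linear_combination qBr ((n : ℤ) - b) * this

lemma green_last (a b : ℕ) (hb : b ≤ a + 1) :
    qBr 2 * (qBr 1)⁻¹ * green (a + 2) (a + 1) b - green (a + 2) a b =
      if b = a + 1 then qBr ((a : ℤ) + 3) else 0 := by
  have h0 := qBr_one_ne_zero
  rcases hb.lt_or_eq with h | rfl
  · rw [green_of_ge (by omega), green_of_ge (by omega), if_neg (by omega)]
    push_cast
    ring_nf
    field_simp
    ring
  · rw [green_of_ge le_rfl, green_of_le (by omega), if_pos rfl]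
    have h3 := qInt_mul_qBr ((a : ℤ) + 2) 2
    have h4 := qInt_mul_qBr ((a : ℤ) + 1) 1
    have h5 := qInt_sub_qInt ((a : ℤ) + 3)
    push_cast
    ring_nf at h3 h4 h5 ⊢
    field_simp
    linear_combination h3 - h4 + h5

lemma sum_fin_eq (n a : ℕ) (F : ℕ → RatFunc ℚ) :
    ∑ k : Fin n, (if k.val = a then F k.val else 0) = if a < n then F a else 0 := by
  rw [Fin.sum_univ_eq_sum_range (fun k => if k = a then F k else 0) n]
  simp

/-- Expansion of a row of a tridiagonal matrix times a vector. -/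
lemma tridiag_sum (n i : ℕ) (d : RatFunc ℚ) (F : ℕ → RatFunc ℚ) :
    ∑ k : Fin n, (if i = k.val then d else
        if i + 1 = k.val ∨ k.val + 1 = i then -1 else 0) * F k.val =
      (if i < n then d * F i else 0) - (if i + 1 < n then F (i + 1) else 0) -
        (if 0 < i ∧ i - 1 < n then F (i - 1) else 0) := by
  have e : ∀ k : Fin n, (if i = k.val then d else
        if i + 1 = k.val ∨ k.val + 1 = i then -1 else 0) * F k.val =
      (if k.val = i then d * F k.val else 0) - (if k.val = i + 1 then F k.val else 0) -
        (if k.val = i - 1 then (if 0 < i then F k.val else 0) else 0) := by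
    intro k
    split_ifs <;> first | omega | ring
  rw [Finset.sum_congr rfl fun k _ => e k, Finset.sum_sub_distrib, Finset.sum_sub_distrib,
    sum_fin_eq n i (fun k => d * F k), sum_fin_eq n (i + 1) F,
    sum_fin_eq n (i - 1) (fun k => if 0 < i then F k else 0)]
  congr 1
  split_ifs <;> first | omega | rfl

lemma green_row (n : ℕ) (hn : 2 ≤ n) (i j : ℕ) (hi : i < n) (hj : j < n) :
    ∑ k : Fin n, (if i = k.val then (if i + 1 = n then qBr 2 * (qBr 1)⁻¹ else qBr 1) else
        if i + 1 = k.val ∨ k.val + 1 = i then -1 else 0) * green n k.val j =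
      if i = j then qBr ((n : ℤ) + 1) else 0 := by
  rw [tridiag_sum n i _ (fun k => green n k j), if_pos hi]
  by_cases hl : i + 1 = n
  · obtain ⟨a, rfl⟩ : ∃ a, i = a + 1 := ⟨i - 1, by omega⟩
    subst hl
    have := green_last a j (by omega)
    rw [if_pos rfl, if_neg (by omega), if_pos (by omega)]
    simp only [eq_comm (a := a + 1)]
    convert this using 1
    · rw [sub_zero]; rfl
    · push_cast; ring_nf
  · rw [if_neg hl, if_pos (by omega)]
    rcases i with _ | a
    · have := green_first n j
      rw [if_neg (by omega), sub_zero]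
      simpa [eq_comm] using this
    · have := green_middle n a j
      rw [if_pos (by omega)]
      simp only [eq_comm (a := a + 1)]
      rw [← this, Nat.add_sub_cancel]
      ring

lemma isNatLaurent_entry (n a b : ℕ) (ha : a < n) (hb : b < n) :
    IsNatLaurent (qInt ((n : ℤ) + 1) * (scal n a * green n a b * scal n b)) := by
  have h0 := qBr_one_ne_zero
  wlog hab : a ≤ b generalizing a b
  · have := this b a hb ha (by omega)
    rwa [green, min_comm, max_comm, ← green, mul_assoc (scal n b), mul_comm (scal n b),
      mul_comm (green n a b)] at this
  rw [green_of_le hab]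
  have hI : ∀ m : ℕ, IsNatLaurent (qInt ((m : ℤ) + 1)) := fun m => by
    exact_mod_cast isNatLaurent_qInt (m + 1)
  by_cases hbn : b + 1 = n
  · have e : (n : ℤ) - b = 1 := by omega
    by_cases han : a + 1 = n
    · have e' : (a : ℤ) + 1 = n := by omega
      rw [scal, scal, if_pos hbn, if_pos han, e, e']
      convert isNatLaurent_consecutive_div n using 1
      field_simp
    · rw [scal, scal, if_pos hbn, if_neg han, e]
      convert (hI n).mul (hI a) using 1
      field_simp
  · rw [scal, scal, if_neg hbn, if_neg (by omega), one_mul, mul_one]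
    exact (hI n).mul ((hI a).mul (isNatLaurent_qBr _))

/-- The symmetrized `q`-Cartan matrix of type `B_n` is invertible, and every entry of
`[2(n+1)]_q · B(q)⁻¹` lies in `ℕ[q,q⁻¹]`. Indices are `0`-based. -/
theorem typeB_qCartan_inverse (n : ℕ) (hn : 2 ≤ n)
    (B : Matrix (Fin n) (Fin n) (RatFunc ℚ))
    (hB : ∀ i j : Fin n, B i j =
      if i = j then (if i.val + 1 = n then qNum 4 else qNum 2)
      else if i.val + 1 = j.val ∨ j.val + 1 = i.val then
        (if i.val + 1 = n ∨ j.val + 1 = n then -qNum 2 else -1)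
      else 0) :
    IsUnit B ∧ ∀ i j : Fin n, IsNatLaurent (qNum (2 * (n + 1)) * B⁻¹ i j) := by
  have h0 := qBr_one_ne_zero
  have h2 : qNum 2 = qBr 1 := by rw [qNum_eq, ← qInt_two]; rfl
  have h4 : qNum 4 = qBr 2 * qBr 1 := by rw [qNum_eq, ← qInt_four]; rfl
  have hN : qNum (2 * (n + 1)) = qInt ((n : ℤ) + 1) * qBr ((n : ℤ) + 1) := by
    rw [qNum_eq, ← qInt_two_mul]; push_cast; rfl
  have hN0 : qBr ((n : ℤ) + 1) ≠ 0 := by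
    have := qInt_ne_zero (m := 2 * (n + 1)) (by omega)
    rw [← qNum_eq, hN] at this
    exact right_ne_zero_of_mul this
  have hs : ∀ a, scal n a ≠ 0 := fun a => by
    unfold scal; split_ifs
    · exact inv_ne_zero h0
    · exact one_ne_zero
  let C : Matrix (Fin n) (Fin n) (RatFunc ℚ) := fun i j =>
    (qBr ((n : ℤ) + 1))⁻¹ * (scal n i * green n i j * scal n j)
  have hBC : B * C = 1 := by
    ext i j
    -- Each term is the corresponding term for the rescaled matrix, up to factors
    -- depending on `i` and `j` only.
    have e : ∀ k : Fin n, B i k * C k j =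
        ((if i.val = k.val then (if i.val + 1 = n then qBr 2 * (qBr 1)⁻¹ else qBr 1) else
        if i.val + 1 = k.val ∨ k.val + 1 = i.val then -1 else 0) * green n k.val j) *
          ((scal n i)⁻¹ * scal n j * (qBr ((n : ℤ) + 1))⁻¹) := by
      intro k
      have key : B i k * scal n k = (if i.val = k.val then
          (if i.val + 1 = n then qBr 2 * (qBr 1)⁻¹ else qBr 1) else
          if i.val + 1 = k.val ∨ k.val + 1 = i.val then -1 else 0) * (scal n i)⁻¹ := by
        rw [hB, h2, h4]
        simp only [Fin.ext_iff, scal]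
        split_ifs <;> first | omega | (field_simp; done) | simp
      simp only [C]
      linear_combination (qBr ((n : ℤ) + 1))⁻¹ * green n k j * scal n j * key
    rw [Matrix.mul_apply, Finset.sum_congr rfl fun k _ => e k, ← Finset.sum_mul,
      green_row n hn i j i.2 j.2, Matrix.one_apply]
    simp only [Fin.ext_iff]
    split_ifs with hij
    · rw [hij]
      have := hs j
      field_simp
    · simp
  refine ⟨IsUnit.of_mul_eq_one _ hBC, fun i j => ?_⟩
  rw [Matrix.inv_eq_right_inv hBC, hN]
  convert isNatLaurent_entry n i j i.2 j.2 using 1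
  simp only [C]
  field_simp
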